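/- Let n ≥ 2 and let σ = (1 2 3 … 2n) ∈ S_{2n} be a 2n-cycle. Then the only vector v ∈ Λ^{2n−2} U_{2n} satisfying σ·v = −v is v = 0; that is, the linear automorphism of Λ^{2n−2} U_{2n} induced by σ has no eigenvector with eigenvalue −1. (Equivalently: the restriction of the hook representation V_{2,1^{2n−2}} of S_{2n} to the cyclic subgroup generated by σ contains no copy of the one-dimensional representation on which σ acts by −1.) -/

import Mathlib

set_option synthInstance.maxHeartbeats 1000000
set_option maxHeartbeats 1000000

noncomputable section

/-- The sum-of-coordinates linear functional on `ℚ^N`. -/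
def sumMap (N : ℕ) : (Fin N → ℚ) →ₗ[ℚ] ℚ := ∑ i, LinearMap.proj i

/-- The standard representation `U_N = {x ∈ ℚ^N : ∑ x_i = 0}` of the symmetric group. -/
def U (N : ℕ) : Submodule ℚ (Fin N → ℚ) := LinearMap.ker (sumMap N)

lemma mem_U {N : ℕ} (x : Fin N → ℚ) : x ∈ U N ↔ ∑ i, x i = 0 := by
  simp [U, sumMap, LinearMap.mem_ker]

/-- The action of a permutation on `ℚ^N` by permuting coordinates. -/
def permMap (N : ℕ) (σ : Equiv.Perm (Fin N)) : (Fin N → ℚ) →ₗ[ℚ] (Fin N → ℚ) :=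
  LinearMap.funLeft ℚ ℚ ⇑σ⁻¹

lemma permMap_mem {N : ℕ} (σ : Equiv.Perm (Fin N)) {x : Fin N → ℚ} (hx : x ∈ U N) :
    permMap N σ x ∈ U N := by
  rw [mem_U] at hx ⊢
  simpa [permMap, LinearMap.funLeft_apply, Function.comp] using
    (Equiv.sum_comp σ⁻¹ x).trans hx

/-- The action of a permutation on the standard representation `U_N`. -/
def permU (N : ℕ) (σ : Equiv.Perm (Fin N)) : ↥(U N) →ₗ[ℚ] ↥(U N) :=
  (permMap N σ).restrict fun _ hx => permMap_mem σ hx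

/-- The induced (diagonal) action on the exterior algebra of `U_N`; it preserves each
exterior power `⋀[ℚ]^k U_N`. -/
def act (N : ℕ) (σ : Equiv.Perm (Fin N)) :
    ExteriorAlgebra ℚ ↥(U N) →ₗ[ℚ] ExteriorAlgebra ℚ ↥(U N) :=
  (ExteriorAlgebra.map (permU N σ)).toLinearMap

/-- The eigenspace of a linear endomorphism for the eigenvalue `c`. -/
def eigen {V : Type*} [AddCommGroup V] [Module ℚ V] (f : V →ₗ[ℚ] V) (c : ℚ) :
    Submodule ℚ V := LinearMap.ker (f - c • LinearMap.id)

/-- `g` belongs to the hyperoctahedral subgroup of `S_N` on the `q` pairs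
`{a+2i, a+2i+1}` (`0 ≤ i < q`), inducing the permutation `τ` on the set of pairs:
`g` fixes every letter outside the pairs, and sends the `i`-th pair to the `τ(i)`-th pair. -/
def IsHypAt (a : ℕ) {N q : ℕ} (g : Equiv.Perm (Fin N)) (τ : Equiv.Perm (Fin q)) : Prop :=
  (∀ i : Fin N, ((i : ℕ) < a ∨ a + 2*q ≤ (i : ℕ)) → g i = i) ∧
  ∀ i : Fin N, ∀ _h1 : a ≤ (i : ℕ), ∀ _h2 : (i : ℕ) < a + 2*q,
    ((g i : ℕ) - a)/2 = ((τ ⟨((i : ℕ) - a)/2, by omega⟩ : Fin q) : ℕ)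

end

/-!
For an endomorphism `f` of a free module of rank `k + 1` and `v` of degree `k` with
`Λ f v = c • v`, every product `u ∧ v` has top degree, where `Λ f` is multiplication by `det f`.
Hence `(c • f u) ∧ v = (det f • u) ∧ v`, and if `c • f - det f` is surjective then `v` is
annihilated by all vectors. Euler's identity for interior products then forces `v = 0`.
For a full cycle `σ` acting on `U_N` one has `det σ = sign σ`, and `σ - 1` is invertible, since a
`σ`-invariant vector is constant and its coordinates sum to zero; this is the case `c = sign σ`.
-/

open Module

section ExteriorAlgebra

variable {R M ι : Type*} [CommRing R] [AddCommGroup M] [Module R M]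

lemma alternatingMap_apply_eq_det_smul [Fintype ι] [DecidableEq ι] {P : Type*} [AddCommGroup P]
    [Module R P] (b : Basis ι R M) (g : M [⋀^ι]→ₗ[R] P) (w : ι → M) : g w = b.det w • g b := by
  suffices g = (LinearMap.toSpanSingleton R P (g b)).compAlternatingMap b.det from
    DFunLike.congr_fun this w
  refine Basis.ext_alternating b fun i hi => ?_
  let σ : Equiv.Perm ι := Equiv.ofBijective i (Finite.injective_iff_bijective.1 hi)
  change g (b ∘ σ) = b.det (b ∘ σ) • g b
  simp only [AlternatingMap.map_perm, Basis.det_self, smul_assoc, one_smul]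

lemma alternatingMap_apply_comp_eq_det_smul [Finite ι] {P : Type*} [AddCommGroup P] [Module R P]
    (b : Basis ι R M) (g : M [⋀^ι]→ₗ[R] P) (f : M →ₗ[R] M) (w : ι → M) :
    g (f ∘ w) = LinearMap.det f • g w := by
  classical
  cases nonempty_fintype ι
  rw [alternatingMap_apply_eq_det_smul b g (f ∘ w), alternatingMap_apply_eq_det_smul b g w,
    Basis.det_comp, mul_smul]

lemma exteriorAlgebra_map_eq_det_smul {k : ℕ} (b : Basis (Fin k) R M) (f : M →ₗ[R] M)
    {v : ExteriorAlgebra R M} (hv : v ∈ ⋀[R]^k M) :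
    ExteriorAlgebra.map f v = LinearMap.det f • v := by
  rw [← ExteriorAlgebra.ιMulti_span_fixedDegree] at hv
  refine LinearMap.eqOn_span (f := (ExteriorAlgebra.map f).toLinearMap)
    (g := LinearMap.det f • LinearMap.id) ?_ hv
  rintro _ ⟨w, rfl⟩
  exact (ExteriorAlgebra.map_apply_ιMulti f w).trans
    (alternatingMap_apply_comp_eq_det_smul b _ f w)

/-- The interior product (left contraction) of the exterior algebra by a linear form, obtained from
the contraction of Clifford algebras by taking the quadratic form to be zero. -/
def interiorProduct (d : Dual R M) : ExteriorAlgebra R M →ₗ[R] ExteriorAlgebra R M :=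
  CliffordAlgebra.contractLeft (Q := (0 : QuadraticForm R M)) d

lemma interiorProduct_algebraMap (d : Dual R M) (r : R) :
    interiorProduct d (algebraMap R (ExteriorAlgebra R M) r) = 0 :=
  CliffordAlgebra.contractLeft_algebraMap _ d r

lemma interiorProduct_ι_mul (d : Dual R M) (u : M) (v : ExteriorAlgebra R M) :
    interiorProduct d (ExteriorAlgebra.ι R u * v) =
      d u • v - ExteriorAlgebra.ι R u * interiorProduct d v :=
  CliffordAlgebra.contractLeft_ι_mul d u v

variable [Fintype ι]

lemma sum_ι_mul_interiorProduct_ι_mul (b : Basis ι R M) (u : M) (v : ExteriorAlgebra R M) :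
    ∑ i, ExteriorAlgebra.ι R (b i) * interiorProduct (b.coord i) (ExteriorAlgebra.ι R u * v) =
      ExteriorAlgebra.ι R u * v +
        ExteriorAlgebra.ι R u *
          ∑ i, ExteriorAlgebra.ι R (b i) * interiorProduct (b.coord i) v := by
  have anticomm (i : ι) : ExteriorAlgebra.ι R (b i) * ExteriorAlgebra.ι R u =
      -(ExteriorAlgebra.ι R u * ExteriorAlgebra.ι R (b i)) :=
    eq_neg_of_add_eq_zero_left (ExteriorAlgebra.ι_add_mul_swap _ _)
  have term (i : ι) :
      ExteriorAlgebra.ι R (b i) * interiorProduct (b.coord i) (ExteriorAlgebra.ι R u * v) =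
        ExteriorAlgebra.ι R (b.repr u i • b i) * v +
          ExteriorAlgebra.ι R u *
            (ExteriorAlgebra.ι R (b i) * interiorProduct (b.coord i) v) := by
    rw [interiorProduct_ι_mul, mul_sub, ← mul_assoc, anticomm, neg_mul, sub_neg_eq_add, mul_assoc,
      mul_smul_comm, map_smul, smul_mul_assoc, Basis.coord_apply]
  simp_rw [term]
  rw [Finset.sum_add_distrib, ← Finset.sum_mul, ← map_sum, b.sum_repr, Finset.mul_sum]

/-- The exterior analogue of Euler's identity for homogeneous polynomials: interior products play
the role of the partial derivatives. -/
lemma sum_ι_mul_interiorProduct (b : Basis ι R M) {k : ℕ} {v : ExteriorAlgebra R M}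
    (hv : v ∈ ⋀[R]^k M) :
    ∑ i, ExteriorAlgebra.ι R (b i) * interiorProduct (b.coord i) v = k • v := by
  induction hv using Submodule.pow_induction_on_left' with
  | algebraMap r =>
    simp only [interiorProduct_algebraMap, mul_zero, Finset.sum_const_zero, zero_smul]
  | add x y k _ _ hx hy => simp only [map_add, mul_add, Finset.sum_add_distrib, hx, hy, smul_add]
  | mem_mul m hm k x _ hx =>
    obtain ⟨u, rfl⟩ := hm
    rw [sum_ι_mul_interiorProduct_ι_mul, hx, mul_smul_comm, succ_nsmul']

lemma card_nsmul_eq_nsmul_of_forall_ι_mul_eq_zero (b : Basis ι R M) {k : ℕ}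
    {v : ExteriorAlgebra R M} (hv : v ∈ ⋀[R]^k M) (h : ∀ u, ExteriorAlgebra.ι R u * v = 0) :
    Fintype.card ι • v = k • v := by
  have term (i : ι) : ExteriorAlgebra.ι R (b i) * interiorProduct (b.coord i) v = v := by
    have := interiorProduct_ι_mul (b.coord i) (b i) v
    rw [h, map_zero, Basis.coord_apply, Basis.repr_self, Finsupp.single_eq_same, one_smul] at this
    exact (sub_eq_zero.1 this.symm).symm
  rw [← sum_ι_mul_interiorProduct b hv]
  simp_rw [term]
  rw [Finset.sum_const, Finset.card_univ]

theorem eq_zero_of_exteriorAlgebra_map_eq_smul {k : ℕ} (b : Basis (Fin (k + 1)) R M)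
    {f : M →ₗ[R] M} {c : R}
    (hf : Function.Surjective (c • f - LinearMap.det f • LinearMap.id : M →ₗ[R] M))
    {v : ExteriorAlgebra R M} (hv : v ∈ ⋀[R]^k M) (h : ExteriorAlgebra.map f v = c • v) :
    v = 0 := by
  have annihilated (u : M) : ExteriorAlgebra.ι R u * v = 0 := by
    obtain ⟨u, rfl⟩ := hf u
    have top_degree : ExteriorAlgebra.ι R u * v ∈ ⋀[R]^(k + 1) M := by
      rw [ExteriorAlgebra.exteriorPower, pow_succ']
      exact Submodule.mul_mem_mul ⟨u, rfl⟩ hv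
    have hdet := exteriorAlgebra_map_eq_det_smul b f top_degree
    rw [map_mul, ExteriorAlgebra.map_apply_ι, h, mul_smul_comm] at hdet
    simp only [LinearMap.sub_apply, LinearMap.smul_apply, LinearMap.id_apply, map_sub, map_smul,
      sub_mul, smul_mul_assoc, hdet, sub_self]
  simpa only [Fintype.card_fin, succ_nsmul, add_eq_left] using
    card_nsmul_eq_nsmul_of_forall_ι_mul_eq_zero b hv annihilated

end ExteriorAlgebra

lemma det_funLeft {R n : Type*} [CommRing R] [Fintype n] [DecidableEq n] (σ : Equiv.Perm n) :
    LinearMap.det (LinearMap.funLeft R R σ) = Equiv.Perm.sign σ := by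
  have : LinearMap.funLeft R R σ = Matrix.toLin' (σ.permMatrix R) :=
    LinearMap.ext fun x => (Matrix.permMatrix_mulVec σ).symm
  rw [this, LinearMap.det_toLin', Matrix.det_permutation]

lemma det_restrict_of_forall_sub_mem {R V : Type*} [CommRing R] [AddCommGroup V] [Module R V]
    [Module.Finite R V] {W : Submodule R V} [Module.Free R W] [Module.Finite R W]
    [Module.Free R (V ⧸ W)] {f : V →ₗ[R] V} (hW : ∀ x ∈ W, f x ∈ W) (hf : ∀ x, f x - x ∈ W) :
    LinearMap.det (f.restrict hW) = LinearMap.det f := by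
  have quotient_id : W.mapQ W f hW = LinearMap.id :=
    Submodule.linearMap_qext _ (LinearMap.ext fun x => (Submodule.Quotient.eq W).2 (hf x))
  rw [LinearMap.det_eq_det_mul_det W f hW, quotient_id, LinearMap.det_id, mul_one]

lemma apply_eq_of_sameCycle {α β : Type*} {σ : Equiv.Perm α} {g : α → β} (hg : g ∘ σ = g)
    {i j : α} (hij : σ.SameCycle i j) : g i = g j := by
  obtain ⟨m, rfl⟩ := hij
  refine zpow_induction_left (P := fun τ : Equiv.Perm α => g i = g (τ i)) rfl
    (fun τ hτ => hτ.trans (congrFun hg (τ i)).symm) (fun τ hτ => hτ.trans ?_) m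
  simpa using congrFun hg (σ⁻¹ (τ i))

section StandardRepresentation

variable {N : ℕ} (σ : Equiv.Perm (Fin N))

lemma sumMap_permMap (x : Fin N → ℚ) : sumMap N (permMap N σ x) = sumMap N x := by
  simpa [sumMap, permMap, LinearMap.funLeft_apply] using Equiv.sum_comp σ⁻¹ x

lemma det_permU : LinearMap.det (permU N σ) = Equiv.Perm.sign σ :=
  calc LinearMap.det (permU N σ)
    _ = LinearMap.det (permMap N σ) :=
      det_restrict_of_forall_sub_mem (fun _ hx => permMap_mem σ hx)
        fun x => LinearMap.sub_mem_ker_iff.2 (sumMap_permMap σ x)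
    _ = Equiv.Perm.sign σ⁻¹ := det_funLeft σ⁻¹
    _ = Equiv.Perm.sign σ := by rw [Equiv.Perm.sign_inv]

lemma finrank_U_add_one [NeZero N] : finrank ℚ (U N) + 1 = N := by
  have sumMap_ne_zero : sumMap N ≠ 0 := fun h => by
    simpa [sumMap] using LinearMap.congr_fun h (Pi.single 0 1)
  exact (Dual.finrank_ker_add_one_of_ne_zero sumMap_ne_zero).trans (finrank_fin_fun ℚ)

variable {σ}

lemma eq_zero_of_permU_apply_eq_self (hσ : ∀ i j, σ.SameCycle i j) {x : U N}
    (hx : permU N σ x = x) : x = 0 := by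
  have constant (i j : Fin N) : x.1 i = x.1 j :=
    apply_eq_of_sameCycle (congrArg Subtype.val hx) (hσ i j).inv
  refine Subtype.ext (funext fun i => ?_)
  have hsum := (mem_U x.1).1 x.2
  have : NeZero N := ⟨i.pos.ne'⟩
  rw [Finset.sum_congr rfl fun j _ => constant j i, Finset.sum_const, Finset.card_univ,
    Fintype.card_fin] at hsum
  exact (smul_eq_zero.1 hsum).resolve_left (NeZero.ne N)

lemma surjective_smul_permU_sub_smul_id (hσ : ∀ i j, σ.SameCycle i j) {c : ℚ} (hc : c ≠ 0) :
    Function.Surjective (c • permU N σ - c • LinearMap.id : U N →ₗ[ℚ] U N) := by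
  rw [← LinearMap.injective_iff_surjective, ← LinearMap.ker_eq_bot, LinearMap.ker_eq_bot']
  intro x hx
  have invariant : permU N σ x = x := smul_right_injective _ hc (sub_eq_zero.1 hx)
  exact eq_zero_of_permU_apply_eq_self hσ invariant

end StandardRepresentation

theorem stmt4_general {N : ℕ} {σ : Equiv.Perm (Fin N)} (hσ : σ.IsCycle)
    (hsupp : σ.support = Finset.univ) {v : ExteriorAlgebra ℚ (U N)} (hv : v ∈ ⋀[ℚ]^(N - 2) (U N))
    (h : act N σ v = ((Equiv.Perm.sign σ : ℤ) : ℚ) • v) : v = 0 := by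
  have hN : 2 ≤ N := by simpa [hsupp] using hσ.two_le_card_support
  have : NeZero N := ⟨by omega⟩
  have b : Basis (Fin (N - 2 + 1)) ℚ (U N) :=
    finBasisOfFinrankEq ℚ (U N) (by have := finrank_U_add_one (N := N); omega)
  have moved (i : Fin N) : σ i ≠ i :=
    Equiv.Perm.mem_support.1 (hsupp ▸ Finset.mem_univ i)
  refine eq_zero_of_exteriorAlgebra_map_eq_smul b ?_ hv h
  rw [det_permU]
  exact surjective_smul_permU_sub_smul_id (fun i j => hσ.sameCycle (moved i) (moved j))
    (Int.cast_ne_zero.2 (Units.ne_zero _))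

/-- Let `n ≥ 2` and let `σ = (1 2 … 2n) ∈ S_{2n}` be a `2n`-cycle.  The only
vector `v ∈ Λ^{2n−2} U_{2n}` with `σ·v = −v` is `v = 0`. -/
theorem stmt4 (n : ℕ) (hn : 2 ≤ n) (v : ExteriorAlgebra ℚ ↥(U (2*n)))
    (hv : v ∈ ⋀[ℚ]^(2*n-2) ↥(U (2*n)))
    (h : act (2*n) (finRotate (2*n)) v = -v) : v = 0 := by
  have hcard : 2 ≤ 2 * n := by omega
  have hodd : Odd (2 * n - 1) := by grind
  exact stmt4_general (isCycle_finRotate_of_le hcard) (support_finRotate_of_le hcard) hv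
    (by simpa [sign_finRotate, hodd.neg_one_pow] using h)
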